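/- Type-and-coeffect preservation of the CBN translation of the graded λ-calculus: if γ·Γ ⊢ e : τ in the graded source λ-calculus, then γ·⟦Γ⟧n ⊢ ⟦e⟧n : ⟦τ⟧n in CBPV with coeffects (with the same grade vector γ). -/

import Mathlib

set_option autoImplicit false

/-- A preordered semiring of grades `(Q, +, 0, ·, 1, ≤co)`,
where `≤co` is a preorder respected by `+` and `·`. -/
structure CoSig (Q : Type) where
  add : Q → Q → Q
  zero : Q
  mul : Q → Q → Q
  one : Q
  le : Q → Q → Prop
  add_assoc : ∀ a b c, add (add a b) c = add a (add b c)
  add_comm : ∀ a b, add a b = add b a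
  add_zero : ∀ a, add a zero = a
  mul_assoc : ∀ a b c, mul (mul a b) c = mul a (mul b c)
  one_mul : ∀ a, mul one a = a
  mul_one : ∀ a, mul a one = a
  zero_mul : ∀ a, mul zero a = zero
  mul_zero : ∀ a, mul a zero = zero
  left_distrib : ∀ a b c, mul a (add b c) = add (mul a b) (mul a c)
  right_distrib : ∀ a b c, mul (add a b) c = add (mul a c) (mul b c)
  le_refl : ∀ a, le a a
  le_trans : ∀ a b c, le a b → le b c → le a c
  add_le_add : ∀ a b c d, le a b → le c d → le (add a c) (add b d)
  mul_le_mul : ∀ a b c d, le a b → le c d → le (mul a c) (mul b d)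

namespace CBPVCo

/-- Pointwise comparison of grade vectors: `γ₁ ≤co γ₂`. -/
def vle {Q : Type} (S : CoSig Q) (γ₁ γ₂ : List Q) : Prop := List.Forall₂ S.le γ₁ γ₂

/-- Pointwise addition of grade vectors. -/
def vadd {Q : Type} (S : CoSig Q) (γ₁ γ₂ : List Q) : List Q := List.zipWith S.add γ₁ γ₂

/-- Pointwise scaling of a grade vector: `q·γ`. -/
def vscale {Q : Type} (S : CoSig Q) (q : Q) (γ : List Q) : List Q := γ.map (S.mul q)

/-- `γ ≤co 0̄`: every entry of the grade vector is discardable. -/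
def leZero {Q : Type} (S : CoSig Q) (γ : List Q) : Prop := ∀ q ∈ γ, S.le q S.zero

mutual
/-- CBPV value types (coeffect version): `unit`, thunks `U B`, positive products, sums. -/
inductive VTy (Q : Type) : Type where
  | unit : VTy Q
  | thunk : CTy Q → VTy Q
  | prod : VTy Q → VTy Q → VTy Q
  | sum : VTy Q → VTy Q → VTy Q
/-- CBPV computation types (coeffect version): graded functions `A^q → B`,
graded returners `F_q A`, negative products. -/
inductive CTy (Q : Type) : Type where
  | arr : VTy Q → Q → CTy Q → CTy Q
  | F : Q → VTy Q → CTy Q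
  | wth : CTy Q → CTy Q → CTy Q
end

mutual
/-- CBPV values (de Bruijn indices for variables). -/
inductive Val (Q : Type) : Type where
  | var : Nat → Val Q
  | unit : Val Q
  | thunk : Comp Q → Val Q
  | pair : Val Q → Val Q → Val Q
  | inl : Val Q → Val Q
  | inr : Val Q → Val Q
/-- CBPV computations, with grade annotations on binders and on `return`. -/
inductive Comp (Q : Type) : Type where
  | lam : Q → Comp Q → Comp Q
  | app : Comp Q → Val Q → Comp Q
  | force : Val Q → Comp Q
  | split : Q → Val Q → Comp Q → Comp Q
  | cpair : Comp Q → Comp Q → Comp Q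
  | fst : Comp Q → Comp Q
  | snd : Comp Q → Comp Q
  | ret : Q → Val Q → Comp Q
  | letin : Q → Comp Q → Comp Q → Comp Q
  | seq : Val Q → Comp Q → Comp Q
  | case : Q → Val Q → Comp Q → Comp Q → Comp Q
end

mutual
/-- The value typing judgment `γ·Γ ⊢ V : A` of the CBPV type-and-coeffect system. -/
inductive VHasTy {Q : Type} (S : CoSig Q) : List Q → List (VTy Q) → Val Q → VTy Q → Prop where
  | var : ∀ {γ : List Q} {Γ : List (VTy Q)} {x : Nat} {q : Q} {A : VTy Q},
      γ.length = Γ.length → Γ[x]? = some A → γ[x]? = some q → S.le q S.one →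
      (∀ (i : Nat) (q' : Q), i ≠ x → γ[i]? = some q' → S.le q' S.zero) →
      VHasTy S γ Γ (.var x) A
  | unit : ∀ {γ : List Q} {Γ : List (VTy Q)},
      γ.length = Γ.length → leZero S γ → VHasTy S γ Γ .unit .unit
  | thunk : ∀ {γ : List Q} {Γ : List (VTy Q)} {M : Comp Q} {B : CTy Q},
      CHasTy S γ Γ M B → VHasTy S γ Γ (.thunk M) (.thunk B)
  | pair : ∀ {γ γ₁ γ₂ : List Q} {Γ : List (VTy Q)} {V₁ V₂ : Val Q} {A₁ A₂ : VTy Q},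
      VHasTy S γ₁ Γ V₁ A₁ → VHasTy S γ₂ Γ V₂ A₂ → vle S γ (vadd S γ₁ γ₂) →
      VHasTy S γ Γ (.pair V₁ V₂) (.prod A₁ A₂)
  | inl : ∀ {γ : List Q} {Γ : List (VTy Q)} {V : Val Q} {A₁ A₂ : VTy Q},
      VHasTy S γ Γ V A₁ → VHasTy S γ Γ (.inl V) (.sum A₁ A₂)
  | inr : ∀ {γ : List Q} {Γ : List (VTy Q)} {V : Val Q} {A₁ A₂ : VTy Q},
      VHasTy S γ Γ V A₂ → VHasTy S γ Γ (.inr V) (.sum A₁ A₂)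

/-- The computation typing judgment `γ·Γ ⊢ M : B` of the CBPV type-and-coeffect system. -/
inductive CHasTy {Q : Type} (S : CoSig Q) : List Q → List (VTy Q) → Comp Q → CTy Q → Prop where
  | lam : ∀ {γ : List Q} {Γ : List (VTy Q)} {q : Q} {A : VTy Q} {M : Comp Q} {B : CTy Q},
      CHasTy S (q :: γ) (A :: Γ) M B → CHasTy S γ Γ (.lam q M) (.arr A q B)
  | app : ∀ {γ γ₁ γ₂ : List Q} {Γ : List (VTy Q)} {M : Comp Q} {V : Val Q}
      {A : VTy Q} {q : Q} {B : CTy Q},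
      CHasTy S γ₁ Γ M (.arr A q B) → VHasTy S γ₂ Γ V A →
      vle S γ (vadd S γ₁ (vscale S q γ₂)) → CHasTy S γ Γ (.app M V) B
  | force : ∀ {γ : List Q} {Γ : List (VTy Q)} {V : Val Q} {B : CTy Q},
      VHasTy S γ Γ V (.thunk B) → CHasTy S γ Γ (.force V) B
  | ret : ∀ {γ γ₁ : List Q} {Γ : List (VTy Q)} {q : Q} {V : Val Q} {A : VTy Q},
      VHasTy S γ₁ Γ V A → vle S γ (vscale S q γ₁) → CHasTy S γ Γ (.ret q V) (.F q A)
  | letin : ∀ {γ γ₁ γ₂ : List Q} {Γ : List (VTy Q)} {q₁ q₂ : Q} {M N : Comp Q}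
      {A : VTy Q} {B : CTy Q},
      CHasTy S γ₁ Γ M (.F q₁ A) → CHasTy S (S.mul q₁ q₂ :: γ₂) (A :: Γ) N B →
      vle S γ (vadd S (vscale S q₂ γ₁) γ₂) → CHasTy S γ Γ (.letin q₂ M N) B
  | split : ∀ {γ γ₁ γ₂ : List Q} {Γ : List (VTy Q)} {q : Q} {V : Val Q}
      {A₁ A₂ : VTy Q} {N : Comp Q} {B : CTy Q},
      VHasTy S γ₁ Γ V (.prod A₁ A₂) → CHasTy S (q :: q :: γ₂) (A₂ :: A₁ :: Γ) N B →
      vle S γ (vadd S (vscale S q γ₁) γ₂) → CHasTy S γ Γ (.split q V N) B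
  | cpair : ∀ {γ : List Q} {Γ : List (VTy Q)} {M₁ M₂ : Comp Q} {B₁ B₂ : CTy Q},
      CHasTy S γ Γ M₁ B₁ → CHasTy S γ Γ M₂ B₂ → CHasTy S γ Γ (.cpair M₁ M₂) (.wth B₁ B₂)
  | fst : ∀ {γ : List Q} {Γ : List (VTy Q)} {M : Comp Q} {B₁ B₂ : CTy Q},
      CHasTy S γ Γ M (.wth B₁ B₂) → CHasTy S γ Γ (.fst M) B₁
  | snd : ∀ {γ : List Q} {Γ : List (VTy Q)} {M : Comp Q} {B₁ B₂ : CTy Q},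
      CHasTy S γ Γ M (.wth B₁ B₂) → CHasTy S γ Γ (.snd M) B₂
  | seq : ∀ {γ γ₁ γ₂ : List Q} {Γ : List (VTy Q)} {V : Val Q} {M : Comp Q} {B : CTy Q},
      VHasTy S γ₁ Γ V .unit → CHasTy S γ₂ Γ M B → vle S γ (vadd S γ₁ γ₂) →
      CHasTy S γ Γ (.seq V M) B
  | case : ∀ {γ γ₁ γ₂ : List Q} {Γ : List (VTy Q)} {q : Q} {V : Val Q}
      {A₁ A₂ : VTy Q} {M₁ M₂ : Comp Q} {B : CTy Q},
      VHasTy S γ₁ Γ V (.sum A₁ A₂) → CHasTy S (q :: γ₂) (A₁ :: Γ) M₁ B →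
      CHasTy S (q :: γ₂) (A₂ :: Γ) M₂ B → S.le q S.one →
      vle S γ (vadd S (vscale S q γ₁) γ₂) → CHasTy S γ Γ (.case q V M₁ M₂) B
end

/-- Lifting a de Bruijn renaming under one binder. -/
def liftRen (f : Nat → Nat) : Nat → Nat
  | 0 => 0
  | n + 1 => f n + 1

mutual
/-- Renaming of values. -/
def Val.rename {Q : Type} : Val Q → (Nat → Nat) → Val Q
  | .var x, f => .var (f x)
  | .unit, _ => .unit
  | .thunk M, f => .thunk (M.rename f)
  | .pair V₁ V₂, f => .pair (V₁.rename f) (V₂.rename f)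
  | .inl V, f => .inl (V.rename f)
  | .inr V, f => .inr (V.rename f)
/-- Renaming of computations. -/
def Comp.rename {Q : Type} : Comp Q → (Nat → Nat) → Comp Q
  | .lam q M, f => .lam q (M.rename (liftRen f))
  | .app M V, f => .app (M.rename f) (V.rename f)
  | .force V, f => .force (V.rename f)
  | .split q V N, f => .split q (V.rename f) (N.rename (liftRen (liftRen f)))
  | .cpair M₁ M₂, f => .cpair (M₁.rename f) (M₂.rename f)
  | .fst M, f => .fst (M.rename f)
  | .snd M, f => .snd (M.rename f)
  | .ret q V, f => .ret q (V.rename f)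
  | .letin q M N, f => .letin q (M.rename f) (N.rename (liftRen f))
  | .seq V M, f => .seq (V.rename f) (M.rename f)
  | .case q V M₁ M₂, f => .case q (V.rename f) (M₁.rename (liftRen f)) (M₂.rename (liftRen f))
end

/-- Weakening: shift all free variables up by one. -/
def shift {Q : Type} (M : Comp Q) : Comp Q := M.rename Nat.succ

/-- Weakening under one binder. -/
def shift1 {Q : Type} (M : Comp Q) : Comp Q := M.rename (liftRen Nat.succ)

/-- Weakening under two binders. -/
def shift2 {Q : Type} (M : Comp Q) : Comp Q := M.rename (liftRen (liftRen Nat.succ))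

end CBPVCo

namespace LamCo

/-- Types of the graded source λ-calculus (CBN version, with `&`-products):
graded functions, with-products, sums and the graded modal type `□_q τ`. -/
inductive STy (Q : Type) : Type where
  | unit : STy Q
  | arr : STy Q → Q → STy Q → STy Q
  | wth : STy Q → STy Q → STy Q
  | sum : STy Q → STy Q → STy Q
  | box : Q → STy Q → STy Q

/-- Terms of the graded source λ-calculus (de Bruijn indices). -/
inductive STm (Q : Type) : Type where
  | var : Nat → STm Q
  | lam : Q → STm Q → STm Q
  | app : STm Q → STm Q → STm Q
  | unit : STm Q
  | seq : STm Q → STm Q → STm Q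
  | wpair : STm Q → STm Q → STm Q
  | fst : STm Q → STm Q
  | snd : STm Q → STm Q
  | inl : STm Q → STm Q
  | inr : STm Q → STm Q
  | case : Q → STm Q → STm Q → STm Q → STm Q
  | box : Q → STm Q → STm Q
  | unbox : Q → STm Q → STm Q → STm Q

open CBPVCo in
/-- The type-and-coeffect judgment `γ·Γ ⊢ e : τ` of the graded source λ-calculus. -/
inductive HasTy {Q : Type} (S : CoSig Q) : List Q → List (STy Q) → STm Q → STy Q → Prop where
  | var : ∀ {γ : List Q} {Γ : List (STy Q)} {x : Nat} {q : Q} {τ : STy Q},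
      γ.length = Γ.length → Γ[x]? = some τ → γ[x]? = some q → S.le q S.one →
      (∀ (i : Nat) (q' : Q), i ≠ x → γ[i]? = some q' → S.le q' S.zero) →
      HasTy S γ Γ (.var x) τ
  | lam : ∀ {γ : List Q} {Γ : List (STy Q)} {q : Q} {e : STm Q} {τ₁ τ₂ : STy Q},
      HasTy S (q :: γ) (τ₁ :: Γ) e τ₂ → HasTy S γ Γ (.lam q e) (.arr τ₁ q τ₂)
  | app : ∀ {γ γ₁ γ₂ : List Q} {Γ : List (STy Q)} {e₁ e₂ : STm Q} {τ₁ τ₂ : STy Q} {q : Q},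
      HasTy S γ₁ Γ e₁ (.arr τ₁ q τ₂) → HasTy S γ₂ Γ e₂ τ₁ →
      vle S γ (vadd S γ₁ (vscale S q γ₂)) → HasTy S γ Γ (.app e₁ e₂) τ₂
  | unit : ∀ {γ : List Q} {Γ : List (STy Q)},
      γ.length = Γ.length → leZero S γ → HasTy S γ Γ .unit .unit
  | seq : ∀ {γ γ₁ γ₂ : List Q} {Γ : List (STy Q)} {e₁ e₂ : STm Q} {τ : STy Q},
      HasTy S γ₁ Γ e₁ .unit → HasTy S γ₂ Γ e₂ τ → vle S γ (vadd S γ₁ γ₂) →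
      HasTy S γ Γ (.seq e₁ e₂) τ
  | wpair : ∀ {γ : List Q} {Γ : List (STy Q)} {e₁ e₂ : STm Q} {τ₁ τ₂ : STy Q},
      HasTy S γ Γ e₁ τ₁ → HasTy S γ Γ e₂ τ₂ → HasTy S γ Γ (.wpair e₁ e₂) (.wth τ₁ τ₂)
  | fst : ∀ {γ : List Q} {Γ : List (STy Q)} {e : STm Q} {τ₁ τ₂ : STy Q},
      HasTy S γ Γ e (.wth τ₁ τ₂) → HasTy S γ Γ (.fst e) τ₁
  | snd : ∀ {γ : List Q} {Γ : List (STy Q)} {e : STm Q} {τ₁ τ₂ : STy Q},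
      HasTy S γ Γ e (.wth τ₁ τ₂) → HasTy S γ Γ (.snd e) τ₂
  | inl : ∀ {γ : List Q} {Γ : List (STy Q)} {e : STm Q} {τ₁ τ₂ : STy Q},
      HasTy S γ Γ e τ₁ → HasTy S γ Γ (.inl e) (.sum τ₁ τ₂)
  | inr : ∀ {γ : List Q} {Γ : List (STy Q)} {e : STm Q} {τ₁ τ₂ : STy Q},
      HasTy S γ Γ e τ₂ → HasTy S γ Γ (.inr e) (.sum τ₁ τ₂)
  | case : ∀ {γ γ₁ γ₂ : List Q} {Γ : List (STy Q)} {q : Q} {e e₁ e₂ : STm Q}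
      {τ₁ τ₂ τ : STy Q},
      HasTy S γ₁ Γ e (.sum τ₁ τ₂) → HasTy S (q :: γ₂) (τ₁ :: Γ) e₁ τ →
      HasTy S (q :: γ₂) (τ₂ :: Γ) e₂ τ → S.le q S.one →
      vle S γ (vadd S (vscale S q γ₁) γ₂) → HasTy S γ Γ (.case q e e₁ e₂) τ
  | box : ∀ {γ γ₁ : List Q} {Γ : List (STy Q)} {q : Q} {e : STm Q} {τ : STy Q},
      HasTy S γ₁ Γ e τ → vle S γ (vscale S q γ₁) → HasTy S γ Γ (.box q e) (.box q τ)
  | unbox : ∀ {γ γ₁ γ₂ : List Q} {Γ : List (STy Q)} {q₁ q₂ : Q} {e₁ e₂ : STm Q}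
      {τ τ' : STy Q},
      HasTy S γ₁ Γ e₁ (.box q₁ τ) → HasTy S (S.mul q₁ q₂ :: γ₂) (τ :: Γ) e₂ τ' →
      vle S γ (vadd S (vscale S q₂ γ₁) γ₂) → HasTy S γ Γ (.unbox q₂ e₁ e₂) τ'

end LamCo

open CBPVCo LamCo

/-- CBN translation of graded source types into CBPV computation types;
the graded modal type is translated as `⟦□_q τ⟧n = F_q (U ⟦τ⟧n)`. -/
def tyTransN {Q : Type} (S : CoSig Q) : STy Q → CTy Q
  | .unit => .F S.one .unit
  | .arr τ₁ q τ₂ => .arr (.thunk (tyTransN S τ₁)) q (tyTransN S τ₂)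
  | .wth τ₁ τ₂ => .wth (tyTransN S τ₁) (tyTransN S τ₂)
  | .sum τ₁ τ₂ => .F S.one (.sum (.thunk (tyTransN S τ₁)) (.thunk (tyTransN S τ₂)))
  | .box q τ => .F q (.thunk (tyTransN S τ))

/-- Levy's CBN translation of graded source terms into CBPV computations,
extended with the graded modal operations `box` and `unbox`. -/
def tmTransN {Q : Type} (S : CoSig Q) : STm Q → Comp Q
  | .var x => .force (.var x)
  | .lam q e => .lam q (tmTransN S e)
  | .app e₁ e₂ => .app (tmTransN S e₁) (.thunk (tmTransN S e₂))
  | .unit => .ret S.one .unit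
  | .seq e₁ e₂ => .letin S.one (tmTransN S e₁) (.seq (.var 0) (shift (tmTransN S e₂)))
  | .wpair e₁ e₂ => .cpair (tmTransN S e₁) (tmTransN S e₂)
  | .fst e => .fst (tmTransN S e)
  | .snd e => .snd (tmTransN S e)
  | .inl e => .ret S.one (.inl (.thunk (tmTransN S e)))
  | .inr e => .ret S.one (.inr (.thunk (tmTransN S e)))
  | .case q e e₁ e₂ =>
      .letin q (tmTransN S e)
        (.case q (.var 0) (shift1 (tmTransN S e₁)) (shift1 (tmTransN S e₂)))
  | .box q e => .ret q (.thunk (tmTransN S e))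
  | .unbox q₂ e₁ e₂ => .letin q₂ (tmTransN S e₁) (tmTransN S e₂)

/-- Insert at position `k` (does nothing past the end). -/
def insAt {α : Type} : Nat → α → List α → List α
  | 0, a, l => a :: l
  | _ + 1, _, [] => []
  | k + 1, a, b :: l => b :: insAt k a l

/-- The weakening renaming at position `k`. -/
def renAt : Nat → Nat → Nat
  | 0 => Nat.succ
  | k + 1 => liftRen (renAt k)

theorem insAt_length {α β : Type} (a : α) (b : β) : ∀ (k : Nat) (l : List α) (m : List β),
    l.length = m.length → (insAt k a l).length = (insAt k b m).length
  | 0, _, _, h => by simp [insAt, h]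
  | _ + 1, [], [], _ => by simp [insAt]
  | _ + 1, [], _ :: _, h => by simp at h
  | _ + 1, _ :: _, [], h => by simp at h
  | k + 1, _ :: l, _ :: m, h => by
      have := insAt_length a b k l m (by simpa using h)
      simp [insAt, this]

theorem insAt_get {α : Type} (a : α) : ∀ (k : Nat) (l : List α) (x : Nat),
    (insAt k a l)[renAt k x]? = l[x]?
  | 0, _, _ => by simp [insAt, renAt]
  | k + 1, [], _ => by simp [insAt]
  | k + 1, b :: l, 0 => by simp [insAt, renAt, liftRen]
  | k + 1, b :: l, x + 1 => by
      simpa [insAt, renAt, liftRen] using insAt_get a k l x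

theorem insAt_cover {α : Type} (a : α) : ∀ (k : Nat) (l : List α) (i : Nat) (c : α),
    (insAt k a l)[i]? = some c → c = a ∨ ∃ j, i = renAt k j ∧ l[j]? = some c
  | 0, _, 0, c, h => by
      left; simpa [insAt, eq_comm] using h
  | 0, _, i + 1, c, h => by
      right; exact ⟨i, by simp [renAt], by simpa [insAt] using h⟩
  | k + 1, [], i, c, h => by simp [insAt] at h
  | k + 1, b :: l, 0, c, h => by
      right; exact ⟨0, by simp [renAt, liftRen], by simpa [insAt] using h⟩
  | k + 1, b :: l, i + 1, c, h => by
      rcases insAt_cover a k l i c (by simpa [insAt] using h) with h' | ⟨j, hj, hl⟩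
      · exact Or.inl h'
      · right; exact ⟨j + 1, by simp [renAt, liftRen, hj], by simpa using hl⟩

theorem insAt_vadd {Q : Type} (S : CoSig Q) : ∀ (k : Nat) (l m : List Q),
    vadd S (insAt k S.zero l) (insAt k S.zero m) = insAt k S.zero (vadd S l m)
  | 0, _, _ => by simp [insAt, vadd, S.add_zero]
  | _ + 1, [], _ => by simp [insAt, vadd]
  | _ + 1, _ :: _, [] => by simp [insAt, vadd]
  | k + 1, _ :: l, _ :: m => by
      simpa [insAt, vadd] using insAt_vadd S k l m

theorem insAt_vscale {Q : Type} (S : CoSig Q) (q : Q) : ∀ (k : Nat) (l : List Q),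
    vscale S q (insAt k S.zero l) = insAt k S.zero (vscale S q l)
  | 0, _ => by simp [insAt, vscale, S.mul_zero]
  | _ + 1, [] => by simp [insAt, vscale]
  | k + 1, _ :: l => by
      simpa [insAt, vscale] using insAt_vscale S q k l

theorem insAt_vle {Q : Type} (S : CoSig Q) : ∀ (k : Nat) (l m : List Q),
    vle S l m → vle S (insAt k S.zero l) (insAt k S.zero m)
  | 0, _, _, h => List.Forall₂.cons (S.le_refl _) h
  | _ + 1, _, _, .nil => List.Forall₂.nil
  | k + 1, _, _, .cons h hs => List.Forall₂.cons h (insAt_vle S k _ _ hs)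

mutual
theorem vweak {Q : Type} {S : CoSig Q} {γ : List Q} {Γ : List (VTy Q)} {V : Val Q} {A : VTy Q}
    (h : VHasTy S γ Γ V A) (k : Nat) (C : VTy Q) :
    VHasTy S (insAt k S.zero γ) (insAt k C Γ) (V.rename (renAt k)) A := by
  cases h with
  | var hl hA hq hle ho =>
    rw [Val.rename]
    refine .var (insAt_length _ _ k _ _ hl) (by rw [insAt_get]; exact hA)
      (by rw [insAt_get]; exact hq) hle ?_
    intro i q' hi hq'
    rcases insAt_cover _ _ _ _ _ hq' with rfl | ⟨j, rfl, hj⟩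
    · exact S.le_refl _
    · exact ho j q' (fun e => hi (by rw [e])) hj
  | unit hl hz =>
    rw [Val.rename]
    refine .unit (insAt_length _ _ k _ _ hl) ?_
    intro q' hq'
    obtain ⟨i, hi⟩ := List.mem_iff_getElem?.1 hq'
    rcases insAt_cover _ _ _ _ _ hi with rfl | ⟨j, rfl, hj⟩
    · exact S.le_refl _
    · exact hz _ (List.mem_iff_getElem?.2 ⟨j, hj⟩)
  | thunk h => rw [Val.rename]; exact .thunk (cweak h k C)
  | pair h1 h2 hle =>
    rw [Val.rename]
    exact .pair (vweak h1 k C) (vweak h2 k C)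
      (by rw [insAt_vadd]; exact insAt_vle S k _ _ hle)
  | inl h => rw [Val.rename]; exact .inl (vweak h k C)
  | inr h => rw [Val.rename]; exact .inr (vweak h k C)
theorem cweak {Q : Type} {S : CoSig Q} {γ : List Q} {Γ : List (VTy Q)} {M : Comp Q} {B : CTy Q}
    (h : CHasTy S γ Γ M B) (k : Nat) (C : VTy Q) :
    CHasTy S (insAt k S.zero γ) (insAt k C Γ) (M.rename (renAt k)) B := by
  cases h with
  | lam h => rw [Comp.rename]; exact .lam (cweak h (k + 1) C)
  | app h1 h2 hle =>
    rw [Comp.rename]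
    exact .app (cweak h1 k C) (vweak h2 k C)
      (by rw [insAt_vscale, insAt_vadd]; exact insAt_vle S k _ _ hle)
  | force h => rw [Comp.rename]; exact .force (vweak h k C)
  | ret h hle =>
    rw [Comp.rename]
    exact .ret (vweak h k C) (by rw [insAt_vscale]; exact insAt_vle S k _ _ hle)
  | letin h1 h2 hle =>
    rw [Comp.rename]
    exact .letin (cweak h1 k C) (cweak h2 (k + 1) C)
      (by rw [insAt_vscale, insAt_vadd]; exact insAt_vle S k _ _ hle)
  | split h1 h2 hle =>
    rw [Comp.rename]
    exact .split (vweak h1 k C) (cweak h2 (k + 2) C)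
      (by rw [insAt_vscale, insAt_vadd]; exact insAt_vle S k _ _ hle)
  | cpair h1 h2 => rw [Comp.rename]; exact .cpair (cweak h1 k C) (cweak h2 k C)
  | fst h => rw [Comp.rename]; exact .fst (cweak h k C)
  | snd h => rw [Comp.rename]; exact .snd (cweak h k C)
  | seq h1 h2 hle =>
    rw [Comp.rename]
    exact .seq (vweak h1 k C) (cweak h2 k C)
      (by rw [insAt_vadd]; exact insAt_vle S k _ _ hle)
  | case h1 h2 h3 hq hle =>
    rw [Comp.rename]
    exact .case (vweak h1 k C) (cweak h2 (k + 1) C) (cweak h3 (k + 1) C) hq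
      (by rw [insAt_vscale, insAt_vadd]; exact insAt_vle S k _ _ hle)
end

theorem vle_length {Q : Type} {S : CoSig Q} {l m : List Q} (h : vle S l m) :
    l.length = m.length := List.Forall₂.length_eq h

theorem src_length {Q : Type} {S : CoSig Q} {γ : List Q} {Γ : List (STy Q)} {e : STm Q}
    {τ : STy Q} (h : LamCo.HasTy S γ Γ e τ) : γ.length = Γ.length := by
  induction h with
  | var hl => exact hl
  | unit hl => exact hl
  | lam _ ih => simpa using ih
  | wpair _ _ ih _ => exact ih
  | fst _ ih => exact ih
  | snd _ ih => exact ih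
  | inl _ ih => exact ih
  | inr _ ih => exact ih
  | app _ _ hle ih1 ih2 =>
    have := vle_length hle
    simp [vadd, vscale] at this; omega
  | seq _ _ hle ih1 ih2 =>
    have := vle_length hle
    simp [vadd] at this; omega
  | case _ _ _ _ hle ih1 ih2 ih3 =>
    have := vle_length hle
    simp [vadd, vscale] at this ih2; omega
  | box _ hle ih =>
    have := vle_length hle
    simp [vscale] at this; omega
  | unbox _ _ hle ih1 ih2 =>
    have := vle_length hle
    simp [vadd, vscale] at this ih2; omega

theorem vle_rfl {Q : Type} (S : CoSig Q) : ∀ l : List Q, vle S l l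
  | [] => .nil
  | _ :: l => .cons (S.le_refl _) (vle_rfl S l)

theorem vscale_one {Q : Type} (S : CoSig Q) (l : List Q) : vscale S S.one l = l := by
  induction l with
  | nil => rfl
  | cons a l ih => simp only [vscale, List.map_cons, S.one_mul] at *; rw [ih]

theorem vadd_zeros {Q : Type} (S : CoSig Q) (q : Q) (l : List Q) :
    vadd S (vscale S q (List.replicate l.length S.zero)) l = l := by
  induction l with
  | nil => rfl
  | cons a l ih =>
    simp only [vadd, vscale, List.length_cons, List.replicate_succ, List.map_cons,
      List.zipWith_cons_cons, S.mul_zero] at *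
    rw [ih, S.add_comm, S.add_zero]

theorem vle_top {Q : Type} (S : CoSig Q) (q : Q) (l : List Q) :
    vle S (q :: l) (vadd S (vscale S q (S.one :: List.replicate l.length S.zero))
      (S.zero :: l)) := by
  have h : vadd S (vscale S q (S.one :: List.replicate l.length S.zero)) (S.zero :: l)
      = q :: l := by
    have := vadd_zeros S q l
    simp only [vadd, vscale, List.map_cons, List.zipWith_cons_cons, S.mul_one, S.add_zero] at *
    rw [this]
  rw [h]; exact vle_rfl S _

theorem var_top {Q : Type} (S : CoSig Q) (n : Nat) (Γ : List (VTy Q)) (A : VTy Q)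
    (hn : n = Γ.length) :
    VHasTy S (S.one :: List.replicate n S.zero) (A :: Γ) (.var 0) A := by
  refine .var (q := S.one) (by simp [hn]) (by simp) (by simp) (S.le_refl _) ?_
  intro i q' hi hq'
  cases i with
  | zero => exact absurd rfl hi
  | succ i =>
    have : q' = S.zero := by
      have := List.mem_of_getElem? (l := List.replicate n S.zero) (i := i) (by simpa using hq')
      exact List.eq_of_mem_replicate this
    rw [this]; exact S.le_refl _

/-- Type-and-coeffect preservation of the CBN translation of the graded
λ-calculus: if `γ·Γ ⊢ e : τ` in the graded source λ-calculus, then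
`γ·⟦Γ⟧n ⊢ ⟦e⟧n : ⟦τ⟧n` in CBPV with coeffects, with the same grade vector `γ`. -/
theorem cbn_graded_translation_preservation {Q : Type} (S : CoSig Q)
    {γ : List Q} {Γ : List (STy Q)} {e : STm Q} {τ : STy Q}
    (h : LamCo.HasTy S γ Γ e τ) :
    CHasTy S γ (Γ.map (fun τ' => VTy.thunk (tyTransN S τ'))) (tmTransN S e)
      (tyTransN S τ) := by
  induction h with
  | var hl hA hq hle ho =>
    exact .force (.var (by simpa using hl) (by simp [hA]) hq hle ho)
  | lam _ ih => exact .lam ih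
  | app _ _ hle ih1 ih2 => exact .app ih1 (.thunk ih2) hle
  | @unit γ Γ hl hz =>
    exact .ret (γ₁ := γ) (.unit (by simpa using hl) hz) (by rw [vscale_one]; exact vle_rfl S _)
  | @seq γ γ₁ γ₂ Γ e₁ e₂ τ h1 h2 hle ih1 ih2 =>
    have hlen := src_length h2
    refine .letin (γ₁ := γ₁) (γ₂ := γ₂) ih1 ?_ (by rw [vscale_one]; exact hle)
    rw [S.one_mul]
    refine .seq (var_top S γ₂.length _ _ (by simpa using hlen)) (cweak ih2 0 _) ?_
    have := vle_top S S.one γ₂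
    rw [vscale_one] at this
    exact this
  | wpair _ _ ih1 ih2 => exact .cpair ih1 ih2
  | fst _ ih => exact .fst ih
  | snd _ ih => exact .snd ih
  | @inl γ Γ e τ₁ τ₂ _ ih =>
    exact .ret (γ₁ := γ) (.inl (.thunk ih)) (by rw [vscale_one]; exact vle_rfl S _)
  | @inr γ Γ e τ₁ τ₂ _ ih =>
    exact .ret (γ₁ := γ) (.inr (.thunk ih)) (by rw [vscale_one]; exact vle_rfl S _)
  | @case γ γ₁ γ₂ Γ q e e₁ e₂ τ₁ τ₂ τ h h1 h2 hq hle ih ih1 ih2 =>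
    have hlen := src_length h1
    refine .letin (γ₁ := γ₁) (γ₂ := γ₂) ih ?_ hle
    rw [S.one_mul]
    exact .case (var_top S γ₂.length _ _ (by simpa using hlen)) (cweak ih1 1 _) (cweak ih2 1 _)
      hq (vle_top S q γ₂)
  | box _ hle ih => exact .ret (.thunk ih) hle
  | unbox _ _ hle ih1 ih2 => exact .letin ih1 ih2 hle
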